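/- Suppose (a) for every φ ∈ Φ, the integrands ℓ(φ(x),y), g_i(φ(x),y) (i=1,…,I) and h_j(φ(x),y) (j=1,…,J) are integrable with respect to D, P_i and Q_j respectively; (b) Φ is decomposable; (c) P*_φ > −∞; (d) the marginals on X of D, P₁,…,P_I, Q₁,…,Q_J are atomless; and (e) there exists ξ > 0 such that the ball {c ∈ ℝ^{I+J} : ‖c‖ ≤ ξ} is contained in the interior of the functional constraint epigraph C_φ. Then the functional problem is strongly dual, P*_φ = D*_φ, and the set Opt(D_φ) of dual maximizers is nonempty. -/

import Mathlib

open MeasureTheory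

/-- A (positive) measure is atomless: every measurable set of nonzero measure has a
measurable subset whose measure is neither `0` nor the full measure. -/
def MeasureAtomless {α : Type*} [MeasurableSpace α] (μ : Measure α) : Prop :=
  ∀ A : Set α, MeasurableSet A → μ A ≠ 0 →
    ∃ B ⊆ A, MeasurableSet B ∧ μ B ≠ 0 ∧ μ B ≠ μ A

/-!
Sending `φ` to the tuple of its objective and constraint values maps `Φ` onto a convex set: given
`φ₁`, `φ₂` and a weight `t`, use `φ₁` on a set `Z ⊆ X` and `φ₂` elsewhere, where `Z` carries
exactly the fraction `t` of each of the finitely many integrals of the differences of the two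
integrands. Such a `Z` exists by Lyapunov's theorem for atomless measures, which follows from an
argument of Lindenstrauss: among the `g ∈ L²(μ)` with `0 ≤ g ≤ 1` whose integrals against finitely
many densities are those of the constant `t`, Krein–Milman gives an extreme point. It takes only
the values `0` and `1`, since otherwise atomlessness leaves infinitely many independent directions
in which to perturb `g`, hence one invisible to the finitely many integrals. Convexity turns the
absence of a duality gap into a Hahn–Banach statement for the convex set of attainable (objective,
constraint) values, and the interior point hypothesis makes the separating hyperplane
non-vertical.
-/

open Set Filter Topology

section ExtremePoints

variable {H : Type*} [NormedAddCommGroup H] [InnerProductSpace ℝ H] [CompleteSpace H]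

theorem isCompact_toWeakSpace_image_closedBall (r : ℝ) :
    IsCompact (toWeakSpace ℝ H '' Metric.closedBall 0 r) := by
  let e : H ≃ₗᵢ⋆[ℝ] StrongDual ℝ H := InnerProductSpace.toDual ℝ H
  have hcont : Continuous fun φ : WeakDual ℝ H ↦
      toWeakSpace ℝ H (e.symm (WeakDual.toStrongDual φ)) := by
    refine WeakBilin.continuous_of_continuous_eval _ fun l ↦ ?_
    have hl (φ : WeakDual ℝ H) : l (e.symm (WeakDual.toStrongDual φ)) = φ (e.symm l) := by
      rw [← InnerProductSpace.toDual_symm_apply, real_inner_comm,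
        InnerProductSpace.toDual_symm_apply]
      rfl
    exact (WeakDual.eval_continuous (e.symm l)).congr fun φ ↦ (hl φ).symm
  convert (WeakDual.isCompact_closedBall (0 : StrongDual ℝ H) r).image hcont using 1
  ext x
  constructor
  · rintro ⟨h, hh, rfl⟩
    exact ⟨StrongDual.toWeakDual (e h), by simpa using hh, by simp⟩
  · rintro ⟨φ, hφ, rfl⟩
    exact ⟨_, by simpa using hφ, rfl⟩

theorem extremePoints_nonempty_of_isClosed_of_isBounded {s : Set H} (hs : Convex ℝ s)
    (hclosed : IsClosed s) (hbdd : Bornology.IsBounded s) (hne : s.Nonempty) :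
    (s.extremePoints ℝ).Nonempty := by
  obtain ⟨r, hr⟩ := hbdd.subset_closedBall 0
  have hweak : IsClosed (toWeakSpace ℝ H '' s) := by
    rw [← hclosed.closure_eq, hs.toWeakSpace_closure ℝ]
    exact isClosed_closure
  have hcompact : IsCompact (toWeakSpace ℝ H '' s) :=
    (isCompact_toWeakSpace_image_closedBall r).of_isClosed_subset hweak (image_mono hr)
  have : LocallyConvexSpace ℝ (WeakSpace ℝ H) := WeakBilin.locallyConvexSpace
  have hext := hcompact.extremePoints_nonempty (hne.image _)
  rwa [← image_extremePoints, image_nonempty] at hext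

end ExtremePoints

section Lattice

theorem abs_smul_le {R M : Type*} [Ring R] [LinearOrder R] [IsOrderedRing R] [AddCommGroup M]
    [Lattice M] [Module R M] [PosSMulMono R M] (c : R) (f : M) : |c • f| ≤ |c| • |f| := by
  rcases le_total 0 c with hc | hc
  · rw [abs_of_nonneg hc, abs_le', ← smul_neg]
    exact ⟨smul_le_smul_of_nonneg_left (le_abs_self f) hc,
      smul_le_smul_of_nonneg_left (neg_le_abs f) hc⟩
  · rw [abs_of_nonpos hc, abs_le', ← neg_smul, ← neg_smul_neg c f]
    exact ⟨smul_le_smul_of_nonneg_left (neg_le_abs f) (neg_nonneg.2 hc),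
      smul_le_smul_of_nonneg_left (le_abs_self f) (neg_nonneg.2 hc)⟩

theorem isBounded_Icc_of_hasSolidNorm {M : Type*} [NormedAddCommGroup M] [Lattice M]
    [HasSolidNorm M] [IsOrderedAddMonoid M] (a b : M) : Bornology.IsBounded (Icc a b) := by
  refine isBounded_iff_forall_norm_le.2 ⟨‖a‖ + ‖b - a‖, fun x hx ↦ ?_⟩
  have hle : ‖x - a‖ ≤ ‖b - a‖ := norm_le_norm_of_abs_le_abs <| by
    rw [abs_of_nonneg (sub_nonneg.2 hx.1), abs_of_nonneg (sub_nonneg.2 (hx.1.trans hx.2))]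
    exact sub_le_sub_right hx.2 a
  calc ‖x‖ = ‖a + (x - a)‖ := by rw [add_sub_cancel]
    _ ≤ ‖a‖ + ‖b - a‖ := (norm_add_le _ _).trans (by gcongr)

variable {X : Type*} [MeasurableSpace X] {p : ENNReal}

instance lp_posSMulMono (μ : Measure X) : PosSMulMono ℝ (Lp ℝ p μ) := by
  refine PosSMulMono.of_smul_nonneg fun c hc f hf ↦ ?_
  rw [← Lp.coeFn_nonneg] at hf ⊢
  filter_upwards [hf, Lp.coeFn_smul c f] with x hx hcx
  rw [hcx]
  exact mul_nonneg hc hx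

theorem monotone_lp_const (p : ENNReal) (μ : Measure X) [IsFiniteMeasure μ] :
    Monotone (Lp.const p μ : ℝ → Lp ℝ p μ) := fun s t hst ↦ by
  rw [← Lp.coeFn_le]
  filter_upwards [Lp.coeFn_const p μ s, Lp.coeFn_const p μ t] with x hs ht
  rwa [hs, ht]

theorem ae_eq_indicator_of_inf_const_one_sub_eq_zero {μ : Measure X} [IsFiniteMeasure μ]
    {g : Lp ℝ p μ} (hg : g ⊓ (Lp.const p μ 1 - g) = 0) :
    g =ᵐ[μ] {x | g x = 1}.indicator 1 := by
  rw [Lp.ext_iff] at hg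
  filter_upwards [hg, Lp.coeFn_inf g (Lp.const p μ 1 - g), Lp.coeFn_sub (Lp.const p μ 1) g,
    Lp.coeFn_const p μ (1 : ℝ), Lp.coeFn_zero ℝ p μ] with x hx hinf hsub hconst hzero
  have hmin : min (g x) (1 - g x) = 0 := by
    rw [hx, hzero, Pi.inf_apply, hsub, Pi.sub_apply, hconst] at hinf
    exact hinf.symm
  rcases min_choice (g x) (1 - g x) with h | h
  · have hgx : g x = 0 := h ▸ hmin
    simp [hgx]
  · have hgx : g x = 1 := by linarith
    simp [hgx]

end Lattice

namespace MeasureAtomless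

variable {X : Type*} [MeasurableSpace X] {μ : Measure X}

theorem exists_seq_pairwise_disjoint (hμ : MeasureAtomless μ) {A : Set X} (hA : MeasurableSet A)
    (hA₀ : μ A ≠ 0) :
    ∃ B : ℕ → Set X, (∀ n, B n ⊆ A) ∧ (∀ n, MeasurableSet (B n)) ∧ (∀ n, μ (B n) ≠ 0) ∧
      Pairwise (Function.onFun Disjoint B) := by
  choose! S hSA hSm hS₀ hS using hμ
  let C : ℕ → Set X := fun n ↦ S^[n] A
  have hCs (n) : C (n + 1) = S (C n) := Function.iterate_succ_apply' _ _ _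
  have hC (n) : MeasurableSet (C n) ∧ μ (C n) ≠ 0 := by
    induction n with
    | zero => exact ⟨hA, hA₀⟩
    | succ n ih => exact hCs n ▸ ⟨hSm _ ih.1 ih.2, hS₀ _ ih.1 ih.2⟩
  have hsub (n) : C (n + 1) ⊆ C n := hCs n ▸ hSA _ (hC n).1 (hC n).2
  have hanti : Antitone C := antitone_nat_of_succ_le hsub
  refine ⟨fun n ↦ C n \ C (n + 1), fun n ↦ sdiff_subset.trans (hanti n.zero_le),
    fun n ↦ (hC n).1.diff (hC _).1, fun n hn ↦ ?_, ?_⟩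
  · exact hS _ (hC n).1 (hC n).2 (hCs n ▸ measure_eq_measure_of_null_sdiff (hsub n) hn)
  · exact (pairwise_disjoint_on _).2 fun m n hmn ↦
      disjoint_sdiff_left.mono_right (sdiff_subset.trans (hanti hmn))

theorem exists_linearIndependent_abs_le (hμ : MeasureAtomless μ) {w : Lp ℝ 2 μ} (hw : w ≠ 0) :
    ∃ e : ℕ → Lp ℝ 2 μ, LinearIndependent ℝ e ∧ ∀ n, |e n| ≤ |w| := by
  have hsupp : MeasurableSet {x | w x ≠ 0} :=
    (Lp.stronglyMeasurable w).measurable (measurableSet_singleton 0).compl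
  obtain ⟨B, hBw, hBm, hB₀, hBd⟩ := hμ.exists_seq_pairwise_disjoint hsupp
    fun h₀ ↦ hw (Lp.eq_zero_iff_ae_eq_zero.2 h₀)
  let e (n : ℕ) : Lp ℝ 2 μ := ((Lp.memLp w).indicator (hBm n)).toLp _
  have hcoe (n) : e n =ᵐ[μ] (B n).indicator w := MemLp.coeFn_toLp _
  have hne (n) : e n ≠ 0 := fun h₀ ↦ by
    refine hB₀ n (measure_mono_null (fun x hx ↦ ?_)
      ((Lp.eq_zero_iff_ae_eq_zero.1 h₀).symm.trans (hcoe n)))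
    simpa [indicator_of_mem hx] using (hBw n hx).symm
  have horth : Pairwise fun m n ↦ inner ℝ (e m) (e n) = 0 := fun m n hmn ↦ by
    change inner ℝ (e m) (e n) = 0
    rw [L2.inner_def]
    refine integral_eq_zero_of_ae ?_
    filter_upwards [hcoe m, hcoe n] with x hm hn
    by_cases hx : x ∈ B m
    · simp [hn, indicator_of_notMem (disjoint_left.1 (hBd hmn) hx)]
    · simp [hm, indicator_of_notMem hx]
  refine ⟨e, linearIndependent_of_ne_zero_of_inner_eq_zero hne horth, fun n ↦ ?_⟩
  rw [← Lp.coeFn_le]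
  filter_upwards [hcoe n, Lp.coeFn_abs (e n), Lp.coeFn_abs w] with x hx he hw
  rw [he, hw, hx]
  exact norm_indicator_le_norm_self w x

theorem exists_ne_zero_abs_le_map_eq_zero (hμ : MeasureAtomless μ) {W : Type*} [AddCommGroup W]
    [Module ℝ W] [FiniteDimensional ℝ W] (T : Lp ℝ 2 μ →ₗ[ℝ] W) {w : Lp ℝ 2 μ} (hw : w ≠ 0) :
    ∃ h ≠ 0, |h| ≤ |w| ∧ T h = 0 := by
  obtain ⟨e, he, hew⟩ := hμ.exists_linearIndependent_abs_le hw
  have hdep : ¬ LinearIndependent ℝ (T ∘ e) :=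
    Module.Finite.not_linearIndependent_of_infinite _
  obtain ⟨s, c, hsum, i, hi, hci⟩ := not_linearIndependent_iff.1 hdep
  let r : ℝ := ∑ j ∈ s, |c j|
  have hr : 0 < r := (abs_pos.2 hci).trans_le <|
    Finset.single_le_sum (f := fun j ↦ |c j|) (fun j _ ↦ abs_nonneg _) hi
  have hle : |∑ j ∈ s, c j • e j| ≤ r • |w| :=
    calc |∑ j ∈ s, c j • e j| ≤ ∑ j ∈ s, |c j • e j| :=
          Finset.le_sum_of_subadditive _ abs_zero.le abs_add_le _ _
      _ ≤ ∑ j ∈ s, |c j| • |w| := Finset.sum_le_sum fun j _ ↦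
          (abs_smul_le _ _).trans (smul_le_smul_of_nonneg_left (hew j) (abs_nonneg _))
      _ = r • |w| := (Finset.sum_smul ..).symm
  refine ⟨r⁻¹ • ∑ j ∈ s, c j • e j, smul_ne_zero (inv_ne_zero hr.ne') fun h₀ ↦
    hci (linearIndependent_iff'.1 he s c h₀ i hi), ?_, by simpa using .inr hsum⟩
  calc |r⁻¹ • ∑ j ∈ s, c j • e j| ≤ |r⁻¹| • (r • |w|) :=
        (abs_smul_le _ _).trans (smul_le_smul_of_nonneg_left hle (abs_nonneg _))
    _ = |w| := by rw [abs_of_pos (inv_pos.2 hr), inv_smul_smul₀ hr.ne']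

theorem inf_sub_eq_zero_of_mem_extremePoints (hμ : MeasureAtomless μ) {W : Type*} [AddCommGroup W]
    [Module ℝ W] [FiniteDimensional ℝ W] (T : Lp ℝ 2 μ →ₗ[ℝ] W) {a b g : Lp ℝ 2 μ} {c : W}
    (hg : g ∈ (Icc a b ∩ T ⁻¹' {c}).extremePoints ℝ) : (g - a) ⊓ (b - g) = 0 := by
  obtain ⟨⟨⟨hag, hgb⟩, hTg⟩, hext⟩ := hg
  by_contra hw
  obtain ⟨h, hh₀, hhw, hTh⟩ := hμ.exists_ne_zero_abs_le_map_eq_zero T hw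
  rw [abs_of_nonneg (le_inf (sub_nonneg.2 hag) (sub_nonneg.2 hgb)), le_inf_iff] at hhw
  have hle : h ≤ g - a ∧ h ≤ b - g := hhw.imp (le_abs_self h).trans (le_abs_self h).trans
  have hneg : -h ≤ g - a ∧ -h ≤ b - g := hhw.imp (neg_le_abs h).trans (neg_le_abs h).trans
  have hsub : g - h ∈ Icc a b ∩ T ⁻¹' {c} :=
    ⟨⟨le_sub_comm.1 hle.1, by simpa [sub_eq_add_neg] using le_sub_iff_add_le'.1 hneg.2⟩,
      by simpa [hTh] using hTg⟩
  have hadd : g + h ∈ Icc a b ∩ T ⁻¹' {c} :=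
    ⟨⟨by simpa using le_sub_comm.1 hneg.1, le_sub_iff_add_le'.1 hle.2⟩, by simpa [hTh] using hTg⟩
  exact hh₀ (by simpa using hext hsub hadd (mem_openSegment_sub_add g h))

theorem exists_mem_Icc_map_eq_inf_sub_eq_zero (hμ : MeasureAtomless μ) {W : Type*}
    [NormedAddCommGroup W] [NormedSpace ℝ W] [FiniteDimensional ℝ W] (T : Lp ℝ 2 μ →L[ℝ] W)
    {a b u : Lp ℝ 2 μ} (hu : u ∈ Icc a b) :
    ∃ g ∈ Icc a b, T g = T u ∧ (g - a) ⊓ (b - g) = 0 := by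
  obtain ⟨g, hg⟩ := extremePoints_nonempty_of_isClosed_of_isBounded
    (s := Icc a b ∩ T ⁻¹' {T u})
    ((convex_Icc a b).inter ((convex_singleton (T u)).linear_preimage T.toLinearMap))
    (isClosed_Icc.inter (isClosed_singleton.preimage T.continuous))
    ((isBounded_Icc_of_hasSolidNorm a b).subset inter_subset_left) ⟨u, hu, rfl⟩
  exact ⟨g, hg.1.1, hg.1.2, hμ.inf_sub_eq_zero_of_mem_extremePoints T.toLinearMap hg⟩

theorem exists_setIntegral_eq_integral_mul (hμ : MeasureAtomless μ) [IsFiniteMeasure μ]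
    {ι : Type*} [Finite ι] (f : ι → Lp ℝ 2 μ) {u : Lp ℝ 2 μ} (hu : u ∈ Icc 0 (Lp.const 2 μ 1)) :
    ∃ Z, MeasurableSet Z ∧ ∀ i, ∫ x in Z, f i x ∂μ = ∫ x, u x * f i x ∂μ := by
  cases nonempty_fintype ι
  obtain ⟨g, -, hgu, hg⟩ := hμ.exists_mem_Icc_map_eq_inf_sub_eq_zero
    (ContinuousLinearMap.pi fun i ↦ innerSL ℝ (f i)) hu
  have hg01 : g =ᵐ[μ] {x | g x = 1}.indicator 1 :=
    ae_eq_indicator_of_inf_const_one_sub_eq_zero (by simpa using hg)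
  have hZ : MeasurableSet {x | g x = 1} :=
    (Lp.stronglyMeasurable g).measurable (measurableSet_singleton 1)
  refine ⟨{x | g x = 1}, hZ, fun i ↦ ?_⟩
  have hi : inner ℝ (f i) g = inner ℝ (f i) u := congr_fun hgu i
  rw [L2.inner_def, L2.inner_def] at hi
  calc ∫ x in {x | g x = 1}, f i x ∂μ = ∫ x, g x * f i x ∂μ := by
        rw [← integral_indicator hZ]
        refine integral_congr_ae ?_
        filter_upwards [hg01] with x hx
        rw [hx]
        by_cases h : g x = 1 <;> simp [h, indicator]
    _ = ∫ x, u x * f i x ∂μ := by simpa using hi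

theorem of_absolutelyContinuous [SigmaFinite μ] (hμ : MeasureAtomless μ) {ν : Measure X}
    [IsFiniteMeasure ν] (hν : ν ≪ μ) : MeasureAtomless ν := by
  intro A hA hA₀
  let S : Set X := {x | ν.rnDeriv μ x ≠ 0}
  have hS : MeasurableSet S := Measure.measurable_rnDeriv ν μ (measurableSet_singleton 0).compl
  have hν₀ {s : Set X} : ν s = 0 ↔ μ (S ∩ s) = 0 := by
    rw [← withDensity_apply_eq_zero (Measure.measurable_rnDeriv ν μ),
      Measure.withDensity_rnDeriv_eq ν μ hν]
  obtain ⟨B, hBSA, hB, hB₀, hBne⟩ := hμ _ (hS.inter hA) (hν₀.not.1 hA₀)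
  have hBA : B ⊆ A := hBSA.trans inter_subset_right
  refine ⟨B, hBA, hB, ?_, fun h ↦ hBne (measure_eq_measure_of_null_sdiff hBSA ?_)⟩
  · rwa [Ne, hν₀, inter_eq_self_of_subset_right (hBSA.trans inter_subset_left)]
  · have hae : B =ᵐ[ν] A :=
      ae_eq_of_subset_of_measure_ge hBA h.ge hB.nullMeasurableSet (measure_ne_top _ _)
    rw [inter_sdiff_assoc, ← hν₀]
    exact ae_le_set.1 hae.symm.le

theorem sum {ι : Type*} [Fintype ι] {ν : ι → Measure X} [∀ i, IsFiniteMeasure (ν i)]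
    (hν : ∀ i, MeasureAtomless (ν i)) : MeasureAtomless (∑ i, ν i) := by
  intro A hA hA₀
  obtain ⟨i, hi⟩ : ∃ i, ν i A ≠ 0 := by
    simpa [Measure.finsetSum_apply] using hA₀
  obtain ⟨B, hBA, hB, hB₀, hBne⟩ := hν i A hA hi
  have hac : ν i ≪ ∑ i, ν i := Measure.absolutelyContinuous_of_le <|
    Finset.single_le_sum (fun j _ ↦ Measure.zero_le (ν j)) (Finset.mem_univ i)
  refine ⟨B, hBA, hB, fun h ↦ hB₀ (hac h), fun h ↦ hBne (measure_congr (hac.ae_eq ?_))⟩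
  exact ae_eq_of_subset_of_measure_ge hBA h.ge hB.nullMeasurableSet (measure_ne_top _ _)

theorem exists_forall_measureReal_eq_mul {ι : Type*} [Finite ι] {ν : ι → Measure X}
    [∀ i, IsFiniteMeasure (ν i)] (hν : ∀ i, MeasureAtomless (ν i)) {t : ℝ}
    (ht : t ∈ Icc (0 : ℝ) 1) :
    ∃ Z, MeasurableSet Z ∧ ∀ i, (ν i).real Z = t * (ν i).real univ := by
  cases nonempty_fintype ι
  let μ : Measure X := ∑ i, ν i
  have hle (i) : ν i ≤ μ :=
    Finset.single_le_sum (fun j _ ↦ Measure.zero_le (ν j)) (Finset.mem_univ i)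
  have hac (i) : ν i ≪ μ := Measure.absolutelyContinuous_of_le (hle i)
  have hmem (i) : MemLp (fun x ↦ ((ν i).rnDeriv μ x).toReal) 2 μ := by
    refine MemLp.of_bound (Measure.measurable_rnDeriv _ _).ennreal_toReal.aestronglyMeasurable 1 ?_
    filter_upwards [Measure.rnDeriv_le_one_of_le (hle i)] with x hx
    simpa using ENNReal.toReal_mono ENNReal.one_ne_top hx
  have hconst : Lp.const 2 μ t ∈ Icc 0 (Lp.const 2 μ 1) := by
    rw [← map_zero (Lp.const 2 μ)]
    exact ⟨monotone_lp_const 2 μ ht.1, monotone_lp_const 2 μ ht.2⟩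
  obtain ⟨Z, hZ, hZint⟩ := (MeasureAtomless.sum hν).exists_setIntegral_eq_integral_mul
    (fun i ↦ (hmem i).toLp _) hconst
  refine ⟨Z, hZ, fun i ↦ ?_⟩
  calc (ν i).real Z = ∫ x in Z, (hmem i).toLp _ x ∂μ := by
        rw [← Measure.setIntegral_toReal_rnDeriv (hac i)]
        exact integral_congr_ae (ae_restrict_of_ae (hmem i).coeFn_toLp.symm)
    _ = ∫ x, t * ((ν i).rnDeriv μ x).toReal ∂μ := by
        rw [hZint i]
        refine integral_congr_ae ?_
        filter_upwards [(hmem i).coeFn_toLp, Lp.coeFn_const 2 μ t] with x hx hconst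
        rw [hx, hconst, Function.const_apply]
    _ = t * (ν i).real univ := by
        rw [integral_const_mul, Measure.integral_toReal_rnDeriv (hac i)]

end MeasureAtomless

section Decomposable

variable {Ω X E κ : Type*} [MeasurableSpace Ω] [MeasurableSpace X] [Finite κ]
  {m : κ → Measure Ω} [∀ k, IsFiniteMeasure (m k)] {p : Ω → X}

theorem exists_forall_setIntegral_preimage_eq_mul (hp : Measurable p)
    (hm : ∀ k, MeasureAtomless ((m k).map p)) {f : κ → Ω → ℝ} (hf : ∀ k, Integrable (f k) (m k))
    {t : ℝ} (ht : t ∈ Icc (0 : ℝ) 1) :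
    ∃ Z, MeasurableSet Z ∧ ∀ k, ∫ z in p ⁻¹' Z, f k z ∂m k = t * ∫ z, f k z ∂m k := by
  let F : κ ⊕ κ → Ω → ℝ := Sum.elim f fun k z ↦ -f k z
  let n : κ ⊕ κ → Measure Ω := Sum.elim m m
  let ν (i : κ ⊕ κ) : Measure X := ((n i).withDensity fun z ↦ .ofReal (F i z)).map p
  have hF (i) : Integrable (F i) (n i) := by
    rcases i with k | k
    exacts [hf k, (hf k).neg]
  have hn (i) : IsFiniteMeasure (n i) := by
    rcases i with k | k <;> exact inferInstanceAs (IsFiniteMeasure (m k))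
  have hfin (i) : IsFiniteMeasure ((n i).withDensity fun z ↦ .ofReal (F i z)) :=
    isFiniteMeasure_withDensity_ofReal (hF i).2
  have hν (i) : MeasureAtomless (ν i) := by
    have hi : MeasureAtomless ((n i).map p) := by rcases i with k | k <;> exact hm k
    exact hi.of_absolutelyContinuous ((withDensity_absolutelyContinuous _ _).map hp)
  obtain ⟨Z, hZ, hνZ⟩ := MeasureAtomless.exists_forall_measureReal_eq_mul hν ht
  have hreal (i) {A : Set X} (hA : MeasurableSet A) :
      (ν i).real A = (∫⁻ z in p ⁻¹' A, .ofReal (F i z) ∂n i).toReal := by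
    rw [measureReal_def, Measure.map_apply hp hA, withDensity_apply _ (hp hA)]
  refine ⟨Z, hZ, fun k ↦ ?_⟩
  have hpos := hνZ (.inl k)
  have hneg := hνZ (.inr k)
  rw [hreal _ hZ, hreal _ .univ, preimage_univ, Measure.restrict_univ] at hpos hneg
  rw [integral_eq_lintegral_pos_part_sub_lintegral_neg_part (hf k),
    integral_eq_lintegral_pos_part_sub_lintegral_neg_part (hf k).integrableOn, mul_sub]
  exact congr_arg₂ _ hpos hneg

/-- A class of functions is decomposable if it is closed under gluing two of its members along a
measurable set. -/
def IsDecomposable (Φ : Set (X → E)) : Prop :=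
  ∀ φ₁ ∈ Φ, ∀ φ₂ ∈ Φ, ∀ Z : Set X, MeasurableSet Z →
    ∃ φ₃ ∈ Φ, (∀ x ∈ Z, φ₃ x = φ₁ x) ∧ ∀ x ∉ Z, φ₃ x = φ₂ x

theorem IsDecomposable.convex_image_integral {Φ : Set (X → E)} (hΦ : IsDecomposable Φ)
    (hp : Measurable p) (hm : ∀ k, MeasureAtomless ((m k).map p)) {c : κ → E → Ω → ℝ}
    (hc : ∀ φ ∈ Φ, ∀ k, Integrable (fun z ↦ c k (φ (p z)) z) (m k)) :
    Convex ℝ ((fun φ k ↦ ∫ z, c k (φ (p z)) z ∂m k) '' Φ) := by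
  rintro _ ⟨φ₁, hφ₁, rfl⟩ _ ⟨φ₂, hφ₂, rfl⟩ a b ha hb hab
  obtain ⟨Z, hZ, hZint⟩ := exists_forall_setIntegral_preimage_eq_mul hp hm
    (fun k ↦ (hc φ₁ hφ₁ k).sub (hc φ₂ hφ₂ k)) (t := a) ⟨ha, by linarith⟩
  obtain ⟨φ₃, hφ₃, hin, hout⟩ := hΦ φ₁ hφ₁ φ₂ hφ₂ Z hZ
  refine ⟨φ₃, hφ₃, funext fun k ↦ ?_⟩
  let d (z : Ω) : ℝ := c k (φ₁ (p z)) z - c k (φ₂ (p z)) z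
  have hd : Integrable d (m k) := (hc φ₁ hφ₁ k).sub (hc φ₂ hφ₂ k)
  have hsplit (z : Ω) : c k (φ₃ (p z)) z = c k (φ₂ (p z)) z + (p ⁻¹' Z).indicator d z := by
    by_cases hz : p z ∈ Z
    · simp [d, hin _ hz, indicator_of_mem (mem_preimage.2 hz)]
    · simp [hout _ hz, hz]
  calc ∫ z, c k (φ₃ (p z)) z ∂m k
      = (∫ z, c k (φ₂ (p z)) z ∂m k) + ∫ z in p ⁻¹' Z, d z ∂m k := by
        simp only [hsplit]
        rw [integral_add (hc φ₂ hφ₂ k) (hd.indicator (hp hZ)), integral_indicator (hp hZ)]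
    _ = (∫ z, c k (φ₂ (p z)) z ∂m k) +
          a * ((∫ z, c k (φ₁ (p z)) z ∂m k) - ∫ z, c k (φ₂ (p z)) z ∂m k) := by
        rw [← integral_sub (hc φ₁ hφ₁ k) (hc φ₂ hφ₂ k)]
        exact congr_arg _ (hZint k)
    _ = a * (∫ z, c k (φ₁ (p z)) z ∂m k) + b * ∫ z, c k (φ₂ (p z)) z ∂m k := by
        obtain rfl : b = 1 - a := by linarith
        ring

end Decomposable

section Separation

theorem eq_zero_or_mem_convexConeHull_of_mem_pointedConeHull {E : Type*} [AddCommGroup E]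
    [Module ℝ E] {s : Set E} {x : E} (hx : x ∈ PointedCone.hull ℝ s) :
    x = 0 ∨ x ∈ ConvexCone.hull ℝ s := by
  induction hx using Submodule.span_induction with
  | mem x hx => exact .inr (ConvexCone.subset_hull hx)
  | zero => exact .inl rfl
  | add x y _ _ hx hy =>
    rcases hx with rfl | hx
    · simpa using hy
    rcases hy with rfl | hy
    · simpa using Or.inr hx
    · exact .inr (ConvexCone.add_mem _ hx hy)
  | smul c x _ hx =>
    rcases hx with rfl | hx
    · exact .inl (smul_zero c)
    rcases eq_zero_or_pos c with rfl | hc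
    · exact .inl (zero_smul _ x)
    · exact .inr (ConvexCone.smul_mem _ (NNReal.coe_pos.2 hc) hx)

variable {V : Type*} [AddCommGroup V] [Module ℝ V]

theorem exists_linearMap_forall_nonneg_add {S : Set (ℝ × V)} (hS : Convex ℝ S)
    (hcore : ∀ w : V, ∃ c : ℝ, 0 < c ∧ ∃ r, (r, c • w) ∈ S)
    (hnonneg : ∀ r, (r, (0 : V)) ∈ S → 0 ≤ r) :
    ∃ F : V →ₗ[ℝ] ℝ, ∀ x ∈ S, 0 ≤ x.1 + F x.2 := by
  let f : ℝ × V →ₗ.[ℝ] ℝ :=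
    ⟨(⊤ : Submodule ℝ ℝ).prod ⊥, (LinearMap.fst ℝ ℝ V).domRestrict _⟩
  have hdom (r : ℝ) : (r, 0) ∈ f.domain := ⟨trivial, rfl⟩
  have hf (x : f.domain) (hx : (x : ℝ × V) ∈ PointedCone.hull ℝ S) : 0 ≤ f x := by
    obtain ⟨⟨r, v⟩, hv⟩ := x
    obtain rfl : v = 0 := hv.2
    change 0 ≤ r
    rcases eq_zero_or_mem_convexConeHull_of_mem_pointedConeHull hx with h | h
    · exact (congr_arg Prod.fst h).ge
    obtain ⟨c, hc, ⟨a, w⟩, haS, hcr⟩ := (ConvexCone.mem_hull_of_convex hS).1 h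
    simp only [Prod.smul_mk, Prod.mk.injEq, smul_eq_zero, hc.ne', false_or] at hcr
    obtain ⟨rfl, rfl⟩ := hcr
    exact mul_nonneg hc.le (hnonneg a haS)
  have hcofinal (y : ℝ × V) : ∃ x : f.domain, (x : ℝ × V) + y ∈ PointedCone.hull ℝ S := by
    obtain ⟨c, hc, r, hr⟩ := hcore y.2
    refine ⟨⟨(c⁻¹ * r - y.1, 0), hdom _⟩, ?_⟩
    convert (PointedCone.hull ℝ S).smul_mem (inv_nonneg.2 hc.le) (PointedCone.subset_hull hr)
      using 1
    ext <;> simp [hc.ne']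
  obtain ⟨G, hGf, hG⟩ := riesz_extension (PointedCone.hull ℝ S) f hf hcofinal
  refine ⟨G ∘ₗ LinearMap.inr ℝ ℝ V, fun x hx ↦ ?_⟩
  calc 0 ≤ G x := hG _ (PointedCone.subset_hull hx)
    _ = G (x.1, 0) + G (0, x.2) := by rw [← map_add, Prod.fst_add_snd]
    _ = x.1 + G (0, x.2) := congr_arg (· + _) (hGf ⟨(x.1, 0), hdom _⟩)

theorem exists_linearMap_forall_le_add {S : Set (ℝ × V)} (hS : Convex ℝ S)
    (hcore : ∀ w : V, ∃ c : ℝ, 0 < c ∧ ∃ r, (r, c • w) ∈ S) {p : ℝ}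
    (hp : ∀ r, (r, (0 : V)) ∈ S → p ≤ r) :
    ∃ F : V →ₗ[ℝ] ℝ, ∀ x ∈ S, p ≤ x.1 + F x.2 := by
  have hcore' (w : V) : ∃ c : ℝ, 0 < c ∧ ∃ r, (r, c • w) ∈ (fun x ↦ (p, 0) + x) ⁻¹' S :=
    let ⟨c, hc, r, hr⟩ := hcore w
    ⟨c, hc, r - p, by simpa using hr⟩
  have hnonneg (r : ℝ) (hr : (r, (0 : V)) ∈ (fun x ↦ (p, 0) + x) ⁻¹' S) : 0 ≤ r := by
    have hpr := hp (p + r) (by simpa using hr)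
    linarith
  obtain ⟨F, hF⟩ := exists_linearMap_forall_nonneg_add (hS.translate_preimage_right (p, 0)) hcore'
    hnonneg
  refine ⟨F, fun x hx ↦ ?_⟩
  have hx' := hF (x.1 - p, x.2) (by simpa using hx)
  linarith

theorem exists_pos_smul_mem_of_mem_nhds_zero [TopologicalSpace V] [ContinuousSMul ℝ V] {s : Set V}
    (hs : s ∈ 𝓝 0) (w : V) : ∃ c : ℝ, 0 < c ∧ c • w ∈ s := by
  have hw : Tendsto (fun c : ℝ ↦ c • w) (𝓝[>] 0) (𝓝 0) :=
    ((continuous_id.smul continuous_const).tendsto' 0 0 (zero_smul ℝ w)).mono_left inf_le_left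
  exact (eventually_mem_nhdsWithin.and (hw.eventually_mem hs)).exists

theorem nonneg_of_forall_le_add_mul {p r a : ℝ} (h : ∀ t, 0 ≤ t → p ≤ r + t * a) : 0 ≤ a := by
  by_contra! ha
  have hlt := h ((|r - p| + 1) / -a) (div_nonneg (by positivity) (neg_nonneg.2 ha.le))
  rw [div_mul_eq_mul_div, div_neg, mul_div_cancel_right₀ _ ha.ne] at hlt
  linarith [le_abs_self (r - p)]

theorem exists_coeff_forall_apply_prod_pi_eq_sum {R ι κ : Type*} [CommSemiring R] [Fintype ι]
    [Fintype κ] (F : (ι → R) × (κ → R) →ₗ[R] R) :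
    ∃ (a : ι → R) (b : κ → R), ∀ u v, F (u, v) = ∑ i, a i * u i + ∑ j, b j * v j := by
  classical
  refine ⟨fun i ↦ F (fun k ↦ if i = k then 1 else 0, 0),
    fun j ↦ F (0, fun k ↦ if j = k then 1 else 0), fun u v ↦ ?_⟩
  rw [← F.coprod_comp_inl_inr, LinearMap.coprod_apply, LinearMap.pi_apply_eq_sum_univ _ u,
    LinearMap.pi_apply_eq_sum_univ _ v]
  simp [mul_comm]

end Separation

section Duality

variable {α ι κ : Type*}

/-- The objective values of the feasible points of the problem of minimizing `obj φ` over `φ ∈ Φ`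
subject to `G i φ ≤ 0` and `H j φ = 0`; the primal value is their infimum. -/
def primalValues (Φ : Set α) (obj : α → ℝ) (G : ι → α → ℝ) (H : κ → α → ℝ) : Set ℝ :=
  {r | ∃ φ ∈ Φ, (∀ i, G i φ ≤ 0) ∧ (∀ j, H j φ = 0) ∧ r = obj φ}

/-- The constraint epigraph: the right-hand sides `(u, v)` for which the perturbed constraints
`G i φ ≤ u i` and `H j φ = v j` can be met by some `φ ∈ Φ`. -/
def constraintEpigraph (Φ : Set α) (G : ι → α → ℝ) (H : κ → α → ℝ) :
    Set ((ι → ℝ) × (κ → ℝ)) :=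
  {uv | ∃ φ ∈ Φ, (∀ i, G i φ ≤ uv.1 i) ∧ ∀ j, H j φ = uv.2 j}

/-- The constraint epigraph with the objective value recorded in the first coordinate: the convex
set to be separated from the points below the primal value. -/
def valueEpigraph (Φ : Set α) (obj : α → ℝ) (G : ι → α → ℝ) (H : κ → α → ℝ) :
    Set (ℝ × (ι → ℝ) × (κ → ℝ)) :=
  {x | ∃ φ ∈ Φ, obj φ = x.1 ∧ (∀ i, G i φ ≤ x.2.1 i) ∧ ∀ j, H j φ = x.2.2 j}

/-- The values over `Φ` of the Lagrangian with multipliers `lam` and `mu`; the dual function at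
`(lam, mu)` is their infimum. -/
def lagrangianValues [Fintype ι] [Fintype κ] (Φ : Set α) (obj : α → ℝ) (G : ι → α → ℝ)
    (H : κ → α → ℝ) (lam : ι → ℝ) (mu : κ → ℝ) : Set ℝ :=
  {r | ∃ φ ∈ Φ, r = obj φ + ∑ i, lam i * G i φ + ∑ j, mu j * H j φ}

variable {Φ : Set α} {obj : α → ℝ} {G : ι → α → ℝ} {H : κ → α → ℝ}

theorem primalValues_nonempty (h₀ : 0 ∈ constraintEpigraph Φ G H) :
    (primalValues Φ obj G H).Nonempty :=
  let ⟨φ, hφ, hG, hH⟩ := h₀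
  ⟨obj φ, φ, hφ, hG, hH, rfl⟩

theorem convex_valueEpigraph
    (hconv : Convex ℝ ((fun φ ↦ (obj φ, fun i ↦ G i φ, fun j ↦ H j φ)) '' Φ)) :
    Convex ℝ (valueEpigraph Φ obj G H) := by
  rintro ⟨r₁, u₁, v₁⟩ ⟨φ₁, hφ₁, rfl, hu₁, hv₁⟩ ⟨r₂, u₂, v₂⟩ ⟨φ₂, hφ₂, rfl, hu₂, hv₂⟩ a b ha hb hab
  obtain ⟨φ, hφ, heq⟩ := hconv ⟨φ₁, hφ₁, rfl⟩ ⟨φ₂, hφ₂, rfl⟩ ha hb hab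
  simp only [Prod.smul_mk, Prod.mk_add_mk, Prod.mk.injEq] at heq
  obtain ⟨hobj, hG, hH⟩ := heq
  refine ⟨φ, hφ, hobj, fun i ↦ ?_, fun j ↦ ?_⟩
  · calc G i φ = a * G i φ₁ + b * G i φ₂ := congr_fun hG i
      _ ≤ a * u₁ i + b * u₂ i :=
        add_le_add (mul_le_mul_of_nonneg_left (hu₁ i) ha) (mul_le_mul_of_nonneg_left (hu₂ i) hb)
  · calc H j φ = a * H j φ₁ + b * H j φ₂ := congr_fun hH j
      _ = a * v₁ j + b * v₂ j := by rw [hv₁, hv₂]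

variable [Fintype ι] [Fintype κ]

theorem le_sInf_primalValues_of_mem_lowerBounds (h₀ : 0 ∈ constraintEpigraph Φ G H)
    {lam : ι → ℝ} {mu : κ → ℝ} (hlam : ∀ i, 0 ≤ lam i) {b : ℝ}
    (hb : b ∈ lowerBounds (lagrangianValues Φ obj G H lam mu)) :
    b ≤ sInf (primalValues Φ obj G H) := by
  refine le_csInf (primalValues_nonempty h₀) ?_
  rintro _ ⟨φ, hφ, hG, hH, rfl⟩
  have hsum : ∑ i, lam i * G i φ ≤ 0 :=
    Finset.sum_nonpos fun i _ ↦ mul_nonpos_of_nonneg_of_nonpos (hlam i) (hG i)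
  calc b ≤ obj φ + ∑ i, lam i * G i φ + ∑ j, mu j * H j φ := hb ⟨φ, hφ, rfl⟩
    _ ≤ obj φ := by simpa [hH] using hsum

theorem exists_multipliers_sInf_mem_lowerBounds
    (hconv : Convex ℝ ((fun φ ↦ (obj φ, fun i ↦ G i φ, fun j ↦ H j φ)) '' Φ))
    (hbdd : BddBelow (primalValues Φ obj G H)) (hepi : constraintEpigraph Φ G H ∈ 𝓝 0) :
    ∃ (lam : ι → ℝ) (mu : κ → ℝ), (∀ i, 0 ≤ lam i) ∧
      sInf (primalValues Φ obj G H) ∈ lowerBounds (lagrangianValues Φ obj G H lam mu) := by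
  classical
  obtain ⟨φ₀, hφ₀, hG₀, hH₀⟩ : 0 ∈ constraintEpigraph Φ G H := mem_of_mem_nhds hepi
  have hcore (w) : ∃ c : ℝ, 0 < c ∧ ∃ r, (r, c • w) ∈ valueEpigraph Φ obj G H :=
    let ⟨c, hc, φ, hφ, hu, hv⟩ := exists_pos_smul_mem_of_mem_nhds_zero hepi w
    ⟨c, hc, obj φ, φ, hφ, rfl, hu, hv⟩
  have hinf (r) (hr : (r, 0) ∈ valueEpigraph Φ obj G H) : sInf (primalValues Φ obj G H) ≤ r :=
    let ⟨φ, hφ, hobj, hu, hv⟩ := hr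
    csInf_le hbdd ⟨φ, hφ, hu, hv, hobj.symm⟩
  obtain ⟨F, hF⟩ := exists_linearMap_forall_le_add (convex_valueEpigraph hconv) hcore hinf
  obtain ⟨lam, mu, hcoeff⟩ := exists_coeff_forall_apply_prod_pi_eq_sum F
  refine ⟨lam, mu, fun i ↦ ?_, ?_⟩
  · -- The value epigraph is closed under increasing `u i`, so `F` cannot decrease along it.
    refine nonneg_of_forall_le_add_mul (p := sInf (primalValues Φ obj G H)) (r := obj φ₀)
      fun t ht ↦ ?_
    have hsingle : 0 ≤ (Pi.single i 1 : ι → ℝ) := Pi.single_nonneg.2 zero_le_one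
    have hle := hF (obj φ₀, t • Pi.single i 1, 0)
      ⟨φ₀, hφ₀, rfl, fun k ↦ (hG₀ k).trans (mul_nonneg ht (hsingle k)), hH₀⟩
    simpa [hcoeff, Pi.single_apply, mul_comm] using hle
  · rintro _ ⟨φ, hφ, rfl⟩
    have hle := hF (obj φ, fun i ↦ G i φ, fun j ↦ H j φ)
      ⟨φ, hφ, rfl, fun i ↦ le_rfl, fun j ↦ rfl⟩
    rwa [hcoeff, ← add_assoc] at hle

theorem exists_multipliers_isGLB_lagrangianValues
    (hconv : Convex ℝ ((fun φ ↦ (obj φ, fun i ↦ G i φ, fun j ↦ H j φ)) '' Φ))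
    (hbdd : BddBelow (primalValues Φ obj G H)) (hepi : constraintEpigraph Φ G H ∈ 𝓝 0) :
    ∃ (lam : ι → ℝ) (mu : κ → ℝ), (∀ i, 0 ≤ lam i) ∧
      IsGLB (lagrangianValues Φ obj G H lam mu) (sInf (primalValues Φ obj G H)) := by
  obtain ⟨lam, mu, hlam, hle⟩ := exists_multipliers_sInf_mem_lowerBounds hconv hbdd hepi
  exact ⟨lam, mu, hlam, hle, fun b hb ↦
    le_sInf_primalValues_of_mem_lowerBounds (mem_of_mem_nhds hepi) hlam hb⟩

end Duality

theorem IsDecomposable.convex_image_prodMk_integral {X Y E ι κ : Type*} [MeasurableSpace X]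
    [MeasurableSpace Y] [Finite ι] [Finite κ] {Φ : Set (X → E)} (hΦ : IsDecomposable Φ)
    {D : Measure (X × Y)} [IsFiniteMeasure D]
    {P : ι → Measure (X × Y)} [∀ i, IsFiniteMeasure (P i)]
    {Q : κ → Measure (X × Y)} [∀ j, IsFiniteMeasure (Q j)]
    {l : E → Y → ℝ} {g : ι → E → Y → ℝ} {h : κ → E → Y → ℝ}
    (hintl : ∀ φ ∈ Φ, Integrable (fun z : X × Y ↦ l (φ z.1) z.2) D)
    (hintg : ∀ φ ∈ Φ, ∀ i, Integrable (fun z : X × Y ↦ g i (φ z.1) z.2) (P i))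
    (hinth : ∀ φ ∈ Φ, ∀ j, Integrable (fun z : X × Y ↦ h j (φ z.1) z.2) (Q j))
    (hatomD : MeasureAtomless (D.map Prod.fst))
    (hatomP : ∀ i, MeasureAtomless ((P i).map Prod.fst))
    (hatomQ : ∀ j, MeasureAtomless ((Q j).map Prod.fst)) :
    Convex ℝ ((fun φ ↦ (∫ z : X × Y, l (φ z.1) z.2 ∂D,
      fun i ↦ ∫ z : X × Y, g i (φ z.1) z.2 ∂P i,
      fun j ↦ ∫ z : X × Y, h j (φ z.1) z.2 ∂Q j)) '' Φ) := by
  let m (k : Option (ι ⊕ κ)) : Measure (X × Y) := k.elim D (Sum.elim P Q)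
  let c (k : Option (ι ⊕ κ)) : E → Y → ℝ := k.elim l (Sum.elim g h)
  have hm : ∀ k, IsFiniteMeasure (m k) := by
    rintro (_ | i | j)
    exacts [inferInstanceAs (IsFiniteMeasure D), inferInstanceAs (IsFiniteMeasure (P i)),
      inferInstanceAs (IsFiniteMeasure (Q j))]
  have hatom : ∀ k, MeasureAtomless ((m k).map Prod.fst) := by
    rintro (_ | i | j)
    exacts [hatomD, hatomP i, hatomQ j]
  have hint : ∀ φ ∈ Φ, ∀ k, Integrable (fun z : X × Y ↦ c k (φ z.1) z.2) (m k) := by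
    rintro φ hφ (_ | i | j)
    exacts [hintl φ hφ, hintg φ hφ i, hinth φ hφ j]
  have hconv := hΦ.convex_image_integral measurable_fst hatom (c := fun k e z ↦ c k e z.2) hint
  have hlin : IsLinearMap ℝ fun v : Option (ι ⊕ κ) → ℝ ↦
      (v none, fun i ↦ v (some (.inl i)), fun j ↦ v (some (.inr j))) :=
    ⟨fun _ _ ↦ rfl, fun _ _ ↦ rfl⟩
  have himage := hconv.is_linear_image hlin
  rwa [image_image] at himage

theorem functional_problem_strong_duality_general {X Y E ι κ : Type*} [MeasurableSpace X]
    [MeasurableSpace Y] [Fintype ι] [Fintype κ]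
    (D : Measure (X × Y)) [IsFiniteMeasure D]
    (P : ι → Measure (X × Y)) [∀ i, IsFiniteMeasure (P i)]
    (Q : κ → Measure (X × Y)) [∀ j, IsFiniteMeasure (Q j)]
    (l : E → Y → ℝ) (g : ι → E → Y → ℝ) (h : κ → E → Y → ℝ) {Φ : Set (X → E)}
    (hintl : ∀ φ ∈ Φ, Integrable (fun z : X × Y ↦ l (φ z.1) z.2) D)
    (hintg : ∀ φ ∈ Φ, ∀ i, Integrable (fun z : X × Y ↦ g i (φ z.1) z.2) (P i))
    (hinth : ∀ φ ∈ Φ, ∀ j, Integrable (fun z : X × Y ↦ h j (φ z.1) z.2) (Q j))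
    (hdec : IsDecomposable Φ)
    (hatomD : MeasureAtomless (D.map Prod.fst))
    (hatomP : ∀ i, MeasureAtomless ((P i).map Prod.fst))
    (hatomQ : ∀ j, MeasureAtomless ((Q j).map Prod.fst))
    {obj : (X → E) → ℝ} (hobj : ∀ φ, obj φ = ∫ z : X × Y, l (φ z.1) z.2 ∂D)
    {conG : ι → (X → E) → ℝ} (hconG : ∀ i φ, conG i φ = ∫ z : X × Y, g i (φ z.1) z.2 ∂P i)
    {conH : κ → (X → E) → ℝ} (hconH : ∀ j φ, conH j φ = ∫ z : X × Y, h j (φ z.1) z.2 ∂Q j)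
    (hbdd : BddBelow (primalValues Φ obj conG conH))
    (hepi : constraintEpigraph Φ conG conH ∈ 𝓝 0) :
    ∃ (lam : ι → ℝ) (mu : κ → ℝ), (∀ i, 0 ≤ lam i) ∧
      IsGLB (lagrangianValues Φ obj conG conH lam mu) (sInf (primalValues Φ obj conG conH)) ∧
      ∀ (lam' : ι → ℝ) (mu' : κ → ℝ), (∀ i, 0 ≤ lam' i) →
        ∀ b ∈ lowerBounds (lagrangianValues Φ obj conG conH lam' mu'),
          b ≤ sInf (primalValues Φ obj conG conH) := by
  have hconv : Convex ℝ ((fun φ ↦ (obj φ, fun i ↦ conG i φ, fun j ↦ conH j φ)) '' Φ) := by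
    simpa only [hobj, hconG, hconH] using
      hdec.convex_image_prodMk_integral hintl hintg hinth hatomD hatomP hatomQ
  obtain ⟨lam, mu, hlam, hglb⟩ := exists_multipliers_isGLB_lagrangianValues hconv hbdd hepi
  exact ⟨lam, mu, hlam, hglb, fun lam' mu' hlam' b hb ↦
    le_sInf_primalValues_of_mem_lowerBounds (mem_of_mem_nhds hepi) hlam' hb⟩

/-- functional strong duality: for a decomposable class `Φ`, integrable losses,
atomless marginals, `P*_φ > −∞` and `0` in the interior of the functional constraint
epigraph, the functional problem is strongly dual and the set of dual maximizers is
nonempty.  This is expressed by the existence of multipliers `(λ*, μ*)` with `λ* ≥ 0` whose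
dual-function value exists and equals `P*_φ`, while the dual-function value at any other
multipliers is at most `P*_φ`. -/
theorem functional_problem_strong_duality
    {X Y : Type*} [MeasurableSpace X] [MeasurableSpace Y]
    (K I J : ℕ)
    (D : Measure (X × Y)) [IsProbabilityMeasure D]
    (P : Fin I → Measure (X × Y)) [∀ i, IsProbabilityMeasure (P i)]
    (Q : Fin J → Measure (X × Y)) [∀ j, IsProbabilityMeasure (Q j)]
    (l : EuclideanSpace ℝ (Fin K) → Y → ℝ)
    (g : Fin I → EuclideanSpace ℝ (Fin K) → Y → ℝ)
    (h : Fin J → EuclideanSpace ℝ (Fin K) → Y → ℝ)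
    (hl : Measurable (Function.uncurry l))
    (hg : ∀ i, Measurable (Function.uncurry (g i)))
    (hh : ∀ j, Measurable (Function.uncurry (h j)))
    (Φ : Set (X → EuclideanSpace ℝ (Fin K)))
    (hΦmeas : ∀ φ ∈ Φ, Measurable φ)
    -- (a) integrability of all the integrands
    (hintl : ∀ φ ∈ Φ, Integrable (fun z : X × Y => l (φ z.1) z.2) D)
    (hintg : ∀ φ ∈ Φ, ∀ i, Integrable (fun z : X × Y => g i (φ z.1) z.2) (P i))
    (hinth : ∀ φ ∈ Φ, ∀ j, Integrable (fun z : X × Y => h j (φ z.1) z.2) (Q j))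
    -- (b) decomposability
    (hdec : ∀ φ₁ ∈ Φ, ∀ φ₂ ∈ Φ, ∀ Z : Set X, MeasurableSet Z →
      ∃ φ₃ ∈ Φ, (∀ x ∈ Z, φ₃ x = φ₁ x) ∧ ∀ x ∉ Z, φ₃ x = φ₂ x)
    -- (d) atomless X-marginals
    (hatomD : MeasureAtomless (D.map Prod.fst))
    (hatomP : ∀ i, MeasureAtomless ((P i).map Prod.fst))
    (hatomQ : ∀ j, MeasureAtomless ((Q j).map Prod.fst))
    -- expected objective, constraint functionals and Lagrangian
    (obj : (X → EuclideanSpace ℝ (Fin K)) → ℝ)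
    (hobj : ∀ φ, obj φ = ∫ z : X × Y, l (φ z.1) z.2 ∂D)
    (conG : Fin I → (X → EuclideanSpace ℝ (Fin K)) → ℝ)
    (hconG : ∀ i φ, conG i φ = ∫ z : X × Y, g i (φ z.1) z.2 ∂(P i))
    (conH : Fin J → (X → EuclideanSpace ℝ (Fin K)) → ℝ)
    (hconH : ∀ j φ, conH j φ = ∫ z : X × Y, h j (φ z.1) z.2 ∂(Q j))
    (Lag : (X → EuclideanSpace ℝ (Fin K)) → (Fin I → ℝ) → (Fin J → ℝ) → ℝ)
    (hLag : ∀ φ lam mu, Lag φ lam mu = obj φ + ∑ i, lam i * conG i φ + ∑ j, mu j * conH j φ)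
    -- the primal optimal value P*_φ
    (Pφ : ℝ)
    (hPφ : Pφ = sInf {r : ℝ | ∃ φ ∈ Φ, (∀ i, conG i φ ≤ 0) ∧ (∀ j, conH j φ = 0) ∧ r = obj φ})
    -- (c) P*_φ > −∞
    (hbdd : BddBelow {r : ℝ | ∃ φ ∈ Φ, (∀ i, conG i φ ≤ 0) ∧ (∀ j, conH j φ = 0) ∧ r = obj φ})
    -- (e) a ball around 0 inside the interior of the functional constraint epigraph C_φ
    (hball : ∃ ξ > (0 : ℝ), Metric.closedBall (0 : (Fin I → ℝ) × (Fin J → ℝ)) ξ ⊆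
      interior {uv : (Fin I → ℝ) × (Fin J → ℝ) |
        ∃ φ ∈ Φ, (∀ i, conG i φ ≤ uv.1 i) ∧ ∀ j, conH j φ = uv.2 j}) :
    ∃ lam : Fin I → ℝ, ∃ mu : Fin J → ℝ, (∀ i, 0 ≤ lam i) ∧
      IsGLB {r : ℝ | ∃ φ ∈ Φ, r = Lag φ lam mu} Pφ ∧
      ∀ lam' : Fin I → ℝ, ∀ mu' : Fin J → ℝ, (∀ i, 0 ≤ lam' i) →
        ∀ b ∈ lowerBounds {r : ℝ | ∃ φ ∈ Φ, r = Lag φ lam' mu'}, b ≤ Pφ := by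
  obtain ⟨ξ, hξ, hsub⟩ := hball
  simp only [hLag, hPφ]
  exact functional_problem_strong_duality_general D P Q l g h hintl hintg hinth hdec hatomD hatomP
    hatomQ hobj hconG hconH hbdd
    (mem_interior_iff_mem_nhds.1 (hsub (Metric.mem_closedBall_self hξ.le)))
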